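/- Let m, A be positive integers and a : {1,…,3m} → ℤ with 4·a(i) > A and 2·a(i) < A for all i and ∑_{i=1}^{3m} a(i) = m·A. Set p_j := (⌊j/2⌋·A, (⌈j/2⌉ mod 2)·A) for j = 0,…,m and let F := ⋃_{j=1}^{m} [p_{j−1}, p_j] ⊆ ℝ² be the zigzag polyline. The following are equivalent: (i) there exist a permutation π of {1,…,3m}, signs ε(i) ∈ {−1,1} and orientations o(i) ∈ {e₁, e₂} such that, with steps v(i) := ε(i)·a(π(i))·o(i) and nodes x_i := p₀ + ∑_{1 ≤ l ≤ i} v(l), every segment [x_{i−1}, x_i] (i = 1,…,3m) is contained in F and x_{3m} = p_m; (ii) {1,…,3m} can be partitioned into m three-element sets each with a-sum A. -/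

import Mathlib

/-- Coercion of an integer point to the real plane. -/
noncomputable def toR : ℤ × ℤ → ℝ × ℝ := fun p => ((p.1 : ℝ), (p.2 : ℝ))

/-!
Parametrize the zigzag by arc length. It has no shortcuts: two of its points that differ by an
axis-parallel vector of length `c < A` lie on a common edge, hence are `c` apart in arc length. The
total length `m * A` of the struts is the arc length from `p 0` to `p m`, so a path on the zigzag
between these points never turns back, and its nodes have the partial sums of the strut lengths as
arc lengths. Since each strut stays on one edge, an order of the struts admits a path iff no
multiple of `A` lies strictly between two consecutive partial sums.

With `r` struts per part, any `r - 1` struts have total length less than `A`. Hence in such an order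
the first `j` blocks of `r` consecutive struts sum to at most `j * A` (counting up from `j = 0`) and
to at least `j * A` (counting down from `j = m`), so each block sums to `A`.
-/

section PrefixSum

variable {M : Type*} {n : ℕ}

/-- The sum of the first `t` terms of a finite sequence; it is constant for `t ≥ n`. -/
def prefixSum [AddCommMonoid M] (f : Fin n → M) (t : ℕ) : M :=
  ∑ i ∈ Finset.univ.filter (fun i : Fin n => (i : ℕ) < t), f i

lemma prefixSum_zero [AddCommMonoid M] (f : Fin n → M) : prefixSum f 0 = 0 := by
  simp [prefixSum]

lemma prefixSum_self [AddCommMonoid M] (f : Fin n → M) : prefixSum f n = ∑ i, f i := by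
  simp [prefixSum]

lemma prefixSum_succ [AddCommMonoid M] (f : Fin n → M) {t : ℕ} (ht : t < n) :
    prefixSum f (t + 1) = prefixSum f t + f ⟨t, ht⟩ := by
  have hfilter : Finset.univ.filter (fun i : Fin n => (i : ℕ) < t + 1) =
      insert ⟨t, ht⟩ (Finset.univ.filter (fun i : Fin n => (i : ℕ) < t)) := by
    ext i
    simp only [Finset.mem_filter, Finset.mem_univ, true_and, Finset.mem_insert, Fin.ext_iff]
    omega
  rw [prefixSum, hfilter, Finset.sum_insert (by simp), add_comm, prefixSum]

lemma prefixSum_add [AddCommMonoid M] (f : Fin n → M) (t : ℕ) {d : ℕ} (htd : t + d ≤ n) :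
    prefixSum f (t + d) = prefixSum f t + ∑ k : Fin d, f ⟨t + k, by omega⟩ := by
  induction d with
  | zero => simp
  | succ d ih =>
    rw [← add_assoc, prefixSum_succ f (by omega), ih (by omega), Fin.sum_univ_castSucc, add_assoc]
    rfl

lemma prefixSum_mono [AddCommMonoid M] [PartialOrder M] [IsOrderedAddMonoid M] {f : Fin n → M}
    (hf : ∀ i, 0 ≤ f i) : Monotone (prefixSum f) := fun _ _ hst =>
  Finset.sum_le_sum_of_subset_of_nonneg
    (Finset.monotone_filter_right _ fun _ _ hi => hi.trans_le hst) fun i _ _ => hf i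

lemma eq_prefixSum_of_sub_le [AddCommGroup M] [PartialOrder M] [IsOrderedAddMonoid M]
    {f : Fin n → M} {L : ℕ → M} (h0 : L 0 = 0) (hn : L n = ∑ i, f i)
    (hstep : ∀ t (ht : t < n), L (t + 1) - L t ≤ f ⟨t, ht⟩) {t : ℕ} (ht : t ≤ n) :
    L t = prefixSum f t := by
  have hmono : MonotoneOn (fun t => prefixSum f t - L t) (Set.Iic n) := by
    refine monotoneOn_of_le_add_one Set.ordConnected_Iic fun t _ _ ht => ?_
    have := hstep t ht
    rw [prefixSum_succ f ht, sub_le_sub_iff]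
    rw [sub_le_iff_le_add] at this
    calc prefixSum f t + L (t + 1) ≤ prefixSum f t + (f ⟨t, ht⟩ + L t) := by gcongr
      _ = _ := (add_assoc _ _ _).symm
  have hlow := hmono (Nat.zero_le n) ht (Nat.zero_le t)
  have hhigh := hmono ht Set.self_mem_Iic ht
  simp only [prefixSum_zero, prefixSum_self, h0, hn, sub_self] at hlow hhigh
  exact (sub_eq_zero.1 (le_antisymm hhigh hlow)).symm

end PrefixSum

section Zigzag

variable {A : ℤ}

/-- The `j`-th vertex of the zigzag with side length `A`, continued to all `j : ℤ`. -/
def zigzagVertex (A j : ℤ) : ℤ × ℤ := (j / 2 * A, (j + 1) / 2 % 2 * A)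

/-- The unit vector pointing from the `j`-th vertex of the zigzag to the next one. -/
def zigzagDir (j : ℤ) : ℤ × ℤ :=
  if j % 4 = 0 then (0, 1) else if j % 4 = 2 then (0, -1) else (1, 0)

/-- The arc-length parametrization of the zigzag by the integers. -/
def zigzagPoint (A L : ℤ) : ℤ × ℤ := zigzagVertex A (L / A) + (L % A) • zigzagDir (L / A)

/-- The polyline through the first `m + 1` vertices of the zigzag. -/
def zigzagPolyline (A : ℤ) (m : ℕ) : Set (ℝ × ℝ) :=
  ⋃ j ∈ Finset.Icc 1 m, segment ℝ (toR (zigzagVertex A (j - 1 : ℕ))) (toR (zigzagVertex A j))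

lemma zigzagDir_of_even {j : ℤ} (hj : j % 2 = 0) :
    zigzagDir j = (0, 1) ∨ zigzagDir j = (0, -1) := by
  unfold zigzagDir
  split_ifs <;> first | omega | simp

lemma zigzagDir_of_odd {j : ℤ} (hj : j % 2 = 1) : zigzagDir j = (1, 0) := by
  rw [zigzagDir, if_neg (by omega), if_neg (by omega)]

lemma zigzagDir_cases (j : ℤ) :
    zigzagDir j = (0, 1) ∨ zigzagDir j = (0, -1) ∨ zigzagDir j = (1, 0) :=
  (Int.emod_two_eq_zero_or_one j).elim
    (fun heven => (zigzagDir_of_even heven).imp_right .inl)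
    fun hodd => .inr (.inr (zigzagDir_of_odd hodd))

lemma zigzagVertex_succ (A j : ℤ) :
    zigzagVertex A (j + 1) = zigzagVertex A j + A • zigzagDir j := by
  unfold zigzagVertex zigzagDir
  split_ifs with h0 h2
  · rw [show (j + 1) / 2 = j / 2 by omega, show (j + 1 + 1) / 2 % 2 = 1 by omega,
      show j / 2 % 2 = 0 by omega]
    simp
  · rw [show (j + 1) / 2 = j / 2 by omega, show (j + 1 + 1) / 2 % 2 = 0 by omega,
      show j / 2 % 2 = 1 by omega]
    simp
  · rw [show (j + 1) / 2 = j / 2 + 1 by omega, show (j + 1 + 1) / 2 % 2 = (j / 2 + 1) % 2 by omega]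
    simp [add_mul]

lemma zigzagPoint_mul_add (hA : 0 < A) (j : ℤ) {s : ℤ} (hs : s ∈ Set.Icc 0 A) :
    zigzagPoint A (j * A + s) = zigzagVertex A j + s • zigzagDir j := by
  rcases hs.2.eq_or_lt with rfl | hlt
  · rw [← zigzagVertex_succ, zigzagPoint, ← add_one_mul, Int.mul_ediv_cancel _ hA.ne']
    simp
  · have hdiv : (j * A + s) / A = j := by
      rw [add_comm, Int.add_mul_ediv_right _ _ hA.ne', Int.ediv_eq_zero_of_lt hs.1 hlt, zero_add]
    have hmod : (j * A + s) % A = s := by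
      rw [add_comm, Int.add_mul_emod_self_right, Int.emod_eq_of_lt hs.1 hlt]
    rw [zigzagPoint, hdiv, hmod]

lemma zigzagPoint_mul (hA : 0 < A) (j : ℤ) : zigzagPoint A (j * A) = zigzagVertex A j := by
  simpa using zigzagPoint_mul_add hA j (Set.left_mem_Icc.2 hA.le)

lemma zigzagPoint_zero (A : ℤ) : zigzagPoint A 0 = 0 := by
  simp [zigzagPoint, zigzagVertex, Prod.zero_eq_mk]

lemma zigzagPoint_eq_add_smul (hA : 0 < A) {j L L' : ℤ}
    (hL : L ∈ Set.Icc (j * A) ((j + 1) * A)) (hL' : L' ∈ Set.Icc (j * A) ((j + 1) * A)) :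
    zigzagPoint A L' = zigzagPoint A L + (L' - L) • zigzagDir j := by
  have hpoint {l : ℤ} (hl : l ∈ Set.Icc (j * A) ((j + 1) * A)) :
      zigzagPoint A l = zigzagVertex A j + (l - j * A) • zigzagDir j := by
    rw [← zigzagPoint_mul_add hA j ⟨by linarith [hl.1], by linarith [hl.2]⟩, add_sub_cancel]
  rw [hpoint hL, hpoint hL', add_assoc, ← add_smul]
  congr 2
  ring

lemma zigzagPoint_fst_mem_Icc (hA : 0 < A) (L : ℤ) :
    (zigzagPoint A L).1 ∈ Set.Icc (L / A / 2 * A) ((L / A + 1) / 2 * A) := by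
  have hnonneg := Int.emod_nonneg L hA.ne'
  have hlt := Int.emod_lt_of_pos L hA
  rcases Int.emod_two_eq_zero_or_one (L / A) with heven | hodd
  · rw [show (L / A + 1) / 2 = L / A / 2 by omega]
    rcases zigzagDir_of_even heven with hd | hd <;> simp [zigzagPoint, zigzagVertex, hd]
  · rw [show (L / A + 1) / 2 = L / A / 2 + 1 by omega]
    simp only [zigzagPoint, zigzagVertex, zigzagDir_of_odd hodd, Prod.fst_add, Prod.smul_fst,
      smul_eq_mul, mul_one, Set.mem_Icc]
    constructor <;> linarith

lemma zigzagPoint_snd_of_odd {L : ℤ} (hodd : L / A % 2 = 1) :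
    (zigzagPoint A L).2 = (L / A + 1) / 2 % 2 * A := by
  simp [zigzagPoint, zigzagVertex, zigzagDir_of_odd hodd]

lemma le_abs_sub_zigzagPoint (hA : 0 < A) {L L' : ℤ} (h : L / A + 2 ≤ L' / A) :
    A ≤ |(zigzagPoint A L').1 - (zigzagPoint A L).1| ∨
      A ≤ |(zigzagPoint A L').2 - (zigzagPoint A L).2| := by
  by_cases hfar : (L / A + 1) / 2 + 1 ≤ L' / A / 2
  · left
    have hx := (zigzagPoint_fst_mem_Icc hA L).2
    have hx' := (zigzagPoint_fst_mem_Icc hA L').1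
    have hgap := mul_le_mul_of_nonneg_right hfar hA.le
    exact le_abs.2 (.inl (by linarith))
  · right
    rw [zigzagPoint_snd_of_odd (L := L) (by omega), zigzagPoint_snd_of_odd (L := L') (by omega),
      ← sub_mul, abs_mul, abs_of_pos hA]
    exact le_mul_of_one_le_left hA.le (Int.one_le_abs (by omega))

lemma eq_mul_of_zigzagPoint_axisAligned (hA : 0 < A) {L L' : ℤ} (h : L' / A = L / A + 1)
    (haxis : (zigzagPoint A L').1 = (zigzagPoint A L).1 ∨
      (zigzagPoint A L').2 = (zigzagPoint A L).2) : L' = (L / A + 1) * A := by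
  have hlt := Int.emod_lt_of_pos L hA
  suffices L' % A = 0 by rw [← h, Int.ediv_mul_cancel (Int.dvd_of_emod_eq_zero this)]
  have hdiff : zigzagPoint A L' - zigzagPoint A L =
      (A - L % A) • zigzagDir (L / A) + (L' % A) • zigzagDir (L / A + 1) := by
    rw [zigzagPoint, h, zigzagVertex_succ, zigzagPoint]
    module
  have hfst := congrArg Prod.fst hdiff
  have hsnd := congrArg Prod.snd hdiff
  simp only [Prod.fst_sub, Prod.snd_sub, Prod.fst_add, Prod.snd_add, Prod.smul_fst, Prod.smul_snd,
    smul_eq_mul] at hfst hsnd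
  rcases Int.emod_two_eq_zero_or_one (L / A) with heven | hodd
  · rw [zigzagDir_of_odd (j := L / A + 1) (by omega)] at hfst hsnd
    rcases zigzagDir_of_even heven with hd | hd <;> rw [hd] at hfst hsnd <;>
      rcases haxis with h | h <;> linarith
  · rw [zigzagDir_of_odd hodd] at hfst hsnd
    rcases zigzagDir_of_even (j := L / A + 1) (by omega) with hd | hd <;> rw [hd] at hfst hsnd <;>
      rcases haxis with h | h <;> linarith

lemma exists_edge_of_axisAligned (hA : 0 < A) {L L' : ℤ}
    (haxis : (zigzagPoint A L').1 = (zigzagPoint A L).1 ∨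
      (zigzagPoint A L').2 = (zigzagPoint A L).2)
    (hfst : |(zigzagPoint A L').1 - (zigzagPoint A L).1| < A)
    (hsnd : |(zigzagPoint A L').2 - (zigzagPoint A L).2| < A) :
    ∃ j : ℤ, L ∈ Set.Icc (j * A) ((j + 1) * A) ∧ L' ∈ Set.Icc (j * A) ((j + 1) * A) := by
  wlog hLL' : L ≤ L' generalizing L L'
  · obtain ⟨j, hL', hL⟩ := this (haxis.imp Eq.symm Eq.symm) (by rwa [abs_sub_comm])
      (by rwa [abs_sub_comm]) (le_of_not_ge hLL')
    exact ⟨j, hL, hL'⟩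
  have hlow (l : ℤ) : l / A * A ≤ l := Int.ediv_mul_le l hA.ne'
  have hhigh (l : ℤ) : l ≤ (l / A + 1) * A := (Int.lt_ediv_add_one_mul_self l hA).le
  have hdiv : L / A ≤ L' / A := Int.ediv_le_ediv hA hLL'
  refine ⟨L / A, ⟨hlow L, hhigh L⟩, (hlow L).trans hLL', ?_⟩
  obtain hsame | hnext | hfar : L' / A = L / A ∨ L' / A = L / A + 1 ∨ L / A + 2 ≤ L' / A := by
    omega
  · exact hsame ▸ hhigh L'
  · exact (eq_mul_of_zigzagPoint_axisAligned hA hnext haxis).le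
  · rcases le_abs_sub_zigzagPoint hA hfar with h | h
    · exact absurd hfst h.not_gt
    · exact absurd hsnd h.not_gt

lemma exists_edge_of_zigzagPoint_eq_add_smul (hA : 0 < A) {L L' c : ℤ} {o : ℤ × ℤ}
    (ho : o = (1, 0) ∨ o = (0, 1)) (hc : |c| < A)
    (h : zigzagPoint A L' = zigzagPoint A L + c • o) :
    |L' - L| = |c| ∧
      ∃ j : ℤ, L ∈ Set.Icc (j * A) ((j + 1) * A) ∧ L' ∈ Set.Icc (j * A) ((j + 1) * A) := by
  have hedge :
      ∃ j : ℤ, L ∈ Set.Icc (j * A) ((j + 1) * A) ∧ L' ∈ Set.Icc (j * A) ((j + 1) * A) := by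
    rcases ho with rfl | rfl <;> apply exists_edge_of_axisAligned hA <;> simp [h, hc, hA]
  refine ⟨?_, hedge⟩
  obtain ⟨j, hL, hL'⟩ := hedge
  have hsmul : (L' - L) • zigzagDir j = c • o :=
    add_left_cancel ((zigzagPoint_eq_add_smul hA hL hL').symm.trans h)
  rcases zigzagDir_cases j with hd | hd | hd <;> rcases ho with rfl | rfl <;>
    simp only [hd, Prod.ext_iff, Prod.smul_fst, Prod.smul_snd, smul_eq_mul] at hsmul <;> grind

lemma zigzagPoint_injective (hA : 0 < A) : Function.Injective (zigzagPoint A) := by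
  intro L L' h
  have := (exists_edge_of_zigzagPoint_eq_add_smul (c := 0) hA (.inl rfl) (by simpa)
    (by simpa using h.symm)).1
  rw [abs_zero, abs_eq_zero, sub_eq_zero] at this
  exact this.symm

end Zigzag

section Polyline

variable {A : ℤ} {m : ℕ}

lemma toR_add (u v : ℤ × ℤ) : toR (u + v) = toR u + toR v := by
  simp [toR]

lemma toR_injective : Function.Injective toR :=
  Prod.map_injective.2 ⟨Int.cast_injective, Int.cast_injective⟩

lemma toR_mem_segment_iff (hA : 0 < A) {u v d : ℤ × ℤ} (hd : d.1 ^ 2 + d.2 ^ 2 = 1) :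
    toR u ∈ segment ℝ (toR v) (toR (v + A • d)) ↔ ∃ s ∈ Set.Icc 0 A, u = v + s • d := by
  have hA' : (0 : ℝ) < A := Int.cast_pos.2 hA
  have hpoint (θ : ℝ) : toR v + θ • (toR (v + A • d) - toR v) = toR v + (θ * A) • toR d := by
    rw [toR_add, add_sub_cancel_left, mul_smul]
    simp [toR]
  rw [segment_eq_image']
  constructor
  · rintro ⟨θ, ⟨hθ0, hθ1⟩, hu : toR v + θ • (toR (v + A • d) - toR v) = toR u⟩
    rw [hpoint] at hu
    let s : ℤ := (u - v).1 * d.1 + (u - v).2 * d.2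
    have hs : (s : ℝ) = θ * A := by
      obtain ⟨hfst, hsnd⟩ := Prod.ext_iff.1 hu
      simp only [toR, Prod.fst_add, Prod.snd_add, Prod.smul_fst, Prod.smul_snd,
        smul_eq_mul] at hfst hsnd
      have hd' : (d.1 : ℝ) ^ 2 + (d.2 : ℝ) ^ 2 = 1 := by exact_mod_cast hd
      push_cast [s, Prod.fst_sub, Prod.snd_sub]
      rw [← hfst, ← hsnd]
      linear_combination θ * A * hd'
    refine ⟨s, ⟨?_, ?_⟩, toR_injective ?_⟩
    · exact_mod_cast hs ▸ mul_nonneg hθ0 hA'.le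
    · exact_mod_cast hs ▸ mul_le_of_le_one_left hA'.le hθ1
    · rw [← hu, ← hs, toR_add]
      simp [toR]
  · rintro ⟨s, hs, rfl⟩
    refine ⟨s / A, ⟨div_nonneg (mod_cast hs.1) hA'.le, (div_le_one hA').2 (mod_cast hs.2)⟩, ?_⟩
    beta_reduce
    rw [hpoint, div_mul_cancel₀ _ hA'.ne', toR_add]
    simp [toR]

lemma mem_zigzagPolyline_iff {z : ℝ × ℝ} :
    z ∈ zigzagPolyline A m ↔
      ∃ j < m, z ∈ segment ℝ (toR (zigzagVertex A j)) (toR (zigzagVertex A (j + 1))) := by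
  simp only [zigzagPolyline, Set.mem_iUnion, Finset.mem_Icc, exists_prop]
  constructor
  · rintro ⟨j, ⟨h1, hm⟩, hz⟩
    obtain ⟨i, rfl⟩ := Nat.exists_eq_add_of_le' h1
    exact ⟨i, hm, by simpa using hz⟩
  · rintro ⟨j, hj, hz⟩
    exact ⟨j + 1, ⟨by omega, hj⟩, by simpa using hz⟩

lemma toR_mem_zigzagEdge_iff (hA : 0 < A) {u : ℤ × ℤ} {j : ℤ} :
    toR u ∈ segment ℝ (toR (zigzagVertex A j)) (toR (zigzagVertex A (j + 1))) ↔
      ∃ L ∈ Set.Icc (j * A) ((j + 1) * A), u = zigzagPoint A L := by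
  have hunit : (zigzagDir j).1 ^ 2 + (zigzagDir j).2 ^ 2 = 1 := by
    rcases zigzagDir_cases j with hd | hd | hd <;> simp [hd]
  rw [zigzagVertex_succ, toR_mem_segment_iff hA hunit]
  constructor
  · rintro ⟨s, hs, rfl⟩
    exact ⟨j * A + s, ⟨by linarith [hs.1], by linarith [hs.2]⟩, (zigzagPoint_mul_add hA j hs).symm⟩
  · rintro ⟨L, hL, rfl⟩
    have hs : L - j * A ∈ Set.Icc 0 A := ⟨by linarith [hL.1], by linarith [hL.2]⟩
    exact ⟨L - j * A, hs, by rw [← zigzagPoint_mul_add hA j hs, add_sub_cancel]⟩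

lemma exists_zigzagPoint_eq_of_mem (hA : 0 < A) {u : ℤ × ℤ} (hu : toR u ∈ zigzagPolyline A m) :
    ∃ L, zigzagPoint A L = u := by
  obtain ⟨j, -, hu⟩ := mem_zigzagPolyline_iff.1 hu
  obtain ⟨L, -, rfl⟩ := (toR_mem_zigzagEdge_iff hA).1 hu
  exact ⟨L, rfl⟩

lemma segment_subset_zigzagPolyline (hA : 0 < A) {j : ℕ} (hj : j < m) {L L' : ℤ}
    (hL : L ∈ Set.Icc (j * A) ((j + 1) * A)) (hL' : L' ∈ Set.Icc (j * A) ((j + 1) * A)) :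
    segment ℝ (toR (zigzagPoint A L)) (toR (zigzagPoint A L')) ⊆ zigzagPolyline A m := fun _ hz =>
  mem_zigzagPolyline_iff.2 ⟨j, hj, (convex_segment _ _).segment_subset
    ((toR_mem_zigzagEdge_iff hA).2 ⟨L, hL, rfl⟩) ((toR_mem_zigzagEdge_iff hA).2 ⟨L', hL', rfl⟩) hz⟩

end Polyline

section Overlay

variable {A : ℤ} {m n : ℕ} {b : Fin n → ℤ}

/-- Struts of lengths `b`, used in this order, form an axis-aligned path with nodes `X` that runs
inside the zigzag polyline from its first to its last vertex. The signs `ε` and the axes `o` are the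
directions of the struts. -/
def OverlaysZigzag (A : ℤ) (m : ℕ) (b : Fin n → ℤ) : Prop :=
  ∃ (ε : Fin n → ℤ) (o : Fin n → ℤ × ℤ) (X : ℕ → ℝ × ℝ),
    (∀ i, ε i = 1 ∨ ε i = -1) ∧
    (∀ i, o i = (1, 0) ∨ o i = (0, 1)) ∧
    (∀ t : ℕ, X t = toR (zigzagVertex A (0 : ℕ)) +
      toR (prefixSum (fun i => (ε i * b i) • o i) t)) ∧
    (∀ i : ℕ, 1 ≤ i → i ≤ n → segment ℝ (X (i - 1)) (X i) ⊆ zigzagPolyline A m) ∧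
    X n = toR (zigzagVertex A m)

/-- Laid out one after the other on a line, no strut has a multiple of `A` in its interior. -/
def BreaksAtMultiples (A : ℤ) (b : Fin n → ℤ) : Prop :=
  ∀ i : Fin n, ∃ k : ℤ, k * A ≤ prefixSum b i ∧ prefixSum b (i + 1) ≤ (k + 1) * A

lemma toR_zigzagVertex_zero_add (A : ℤ) (u : ℤ × ℤ) :
    toR (zigzagVertex A (0 : ℕ)) + toR u = toR u := by
  simp [zigzagVertex, toR]

lemma OverlaysZigzag.breaksAtMultiples (h : OverlaysZigzag A m b) (hA : 0 < A) (hb0 : ∀ i, 0 ≤ b i)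
    (hbA : ∀ i, b i < A) (hsum : ∑ i, b i = m * A) : BreaksAtMultiples A b := by
  obtain ⟨ε, o, X, hε, ho, hX, hseg, hend⟩ := h
  set x : ℕ → ℤ × ℤ := prefixSum fun i => (ε i * b i) • o i with hx
  simp only [toR_zigzagVertex_zero_add] at hX
  have hx0 : zigzagPoint A 0 = x 0 := by rw [zigzagPoint_zero, hx, prefixSum_zero]
  have hnode : ∀ t ≤ n, ∃ L, zigzagPoint A L = x t := by
    rintro (_ | t) ht
    · exact ⟨0, hx0⟩
    · refine exists_zigzagPoint_eq_of_mem (m := m) hA ?_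
      rw [← hX (t + 1)]
      exact hseg (t + 1) (by omega) ht (right_mem_segment ..)
  choose! L hL using hnode
  have hL0 : L 0 = 0 := zigzagPoint_injective hA ((hL 0 n.zero_le).trans hx0.symm)
  have hLn : L n = ∑ i, b i := by
    apply zigzagPoint_injective hA
    rw [hL n le_rfl, hsum, zigzagPoint_mul hA]
    exact toR_injective ((hX n).symm.trans hend)
  have hstep (i : Fin n) : |L (i + 1) - L i| = b i ∧ ∃ j : ℤ,
      L i ∈ Set.Icc (j * A) ((j + 1) * A) ∧ L (i + 1) ∈ Set.Icc (j * A) ((j + 1) * A) := by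
    have habs : |ε i * b i| = b i := by
      rcases hε i with h | h <;> simp [h, abs_of_nonneg (hb0 i)]
    rw [← habs]
    refine exists_edge_of_zigzagPoint_eq_add_smul hA (ho i) (habs.trans_lt (hbA i)) ?_
    rw [hL i i.2.le, hL (i + 1) i.2, hx, prefixSum_succ _ i.2]
  have hLb {t : ℕ} (ht : t ≤ n) : L t = prefixSum b t :=
    eq_prefixSum_of_sub_le hL0 hLn (fun t ht => (le_abs_self _).trans (hstep ⟨t, ht⟩).1.le) ht
  intro i
  obtain ⟨j, hLi, hLi'⟩ := (hstep i).2
  exact ⟨j, hLb i.2.le ▸ hLi.1, hLb i.2 ▸ hLi'.2⟩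

lemma BreaksAtMultiples.exists_edge (h : BreaksAtMultiples A b) (hA : 0 < A) (hb : ∀ i, 0 < b i)
    (hsum : ∑ i, b i = m * A) (i : Fin n) :
    ∃ j < m, prefixSum b i ∈ Set.Icc ((j : ℤ) * A) ((j + 1) * A) ∧
      prefixSum b (i + 1) ∈ Set.Icc ((j : ℤ) * A) ((j + 1) * A) := by
  have hmono := prefixSum_mono fun i => (hb i).le
  have hlt : prefixSum b i < prefixSum b (i + 1) := by
    rw [prefixSum_succ b i.2]
    exact lt_add_of_pos_right _ (hb i)
  have hnonneg : 0 ≤ prefixSum b i := prefixSum_zero b ▸ hmono (Nat.zero_le i)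
  have hle : prefixSum b (i + 1) ≤ m * A := hsum ▸ prefixSum_self b ▸ hmono i.2
  obtain ⟨k, hk, hk'⟩ := h i
  have hk0 : 0 < k + 1 := pos_of_mul_pos_left (hnonneg.trans_lt (hlt.trans_le hk')) hA.le
  have hkm : k < m := lt_of_mul_lt_mul_right (hk.trans_lt (hlt.trans_le hle)) hA.le
  lift k to ℕ using by omega
  exact ⟨k, by omega, ⟨hk, hlt.le.trans hk'⟩, hk.trans hlt.le, hk'⟩

lemma exists_zigzagDir_eq_smul (j : ℤ) :
    ∃ (ε : ℤ) (o : ℤ × ℤ), (ε = 1 ∨ ε = -1) ∧ (o = (1, 0) ∨ o = (0, 1)) ∧ zigzagDir j = ε • o := by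
  rcases zigzagDir_cases j with hd | hd | hd
  · exact ⟨1, (0, 1), .inl rfl, .inr rfl, hd⟩
  · exact ⟨-1, (0, 1), .inr rfl, .inr rfl, hd⟩
  · exact ⟨1, (1, 0), .inl rfl, .inl rfl, hd⟩

lemma BreaksAtMultiples.overlaysZigzag (h : BreaksAtMultiples A b) (hA : 0 < A) (hb : ∀ i, 0 < b i)
    (hsum : ∑ i, b i = m * A) : OverlaysZigzag A m b := by
  choose j hjm hj hj' using h.exists_edge hA hb hsum
  choose ε o hε ho hdir using fun i => exists_zigzagDir_eq_smul (j i)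
  have hnode {t : ℕ} (ht : t ≤ n) :
      prefixSum (fun i => (ε i * b i) • o i) t = zigzagPoint A (prefixSum b t) := by
    induction t with
    | zero => rw [prefixSum_zero, prefixSum_zero, zigzagPoint_zero]
    | succ t ih =>
      rw [zigzagPoint_eq_add_smul hA (hj ⟨t, ht⟩) (hj' ⟨t, ht⟩), prefixSum_succ _ ht,
        prefixSum_succ b ht, ih (by omega), add_sub_cancel_left, hdir, smul_smul, mul_comm]
  refine ⟨ε, o, _, hε, ho, fun t => rfl, fun i hi hin => ?_, ?_⟩
  · obtain ⟨t, rfl⟩ := Nat.exists_eq_add_of_le' hi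
    simp only [Nat.add_sub_cancel, toR_zigzagVertex_zero_add]
    rw [hnode (by omega), hnode hin]
    exact segment_subset_zigzagPolyline hA (hjm ⟨t, hin⟩) (hj ⟨t, hin⟩) (hj' ⟨t, hin⟩)
  · rw [toR_zigzagVertex_zero_add, hnode le_rfl, prefixSum_self, hsum, zigzagPoint_mul hA]

theorem overlaysZigzag_iff_breaksAtMultiples (hA : 0 < A) (hb0 : ∀ i, 0 < b i)
    (hbA : ∀ i, b i < A) (hsum : ∑ i, b i = m * A) :
    OverlaysZigzag A m b ↔ BreaksAtMultiples A b :=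
  ⟨fun h => h.breaksAtMultiples hA (fun i => (hb0 i).le) hbA hsum,
    fun h => h.overlaysZigzag hA hb0 hsum⟩

end Overlay

section Blocks

variable {A : ℤ} {m r : ℕ}

/-- The numbering of `m` consecutive blocks of length `r`: position `k` of block `j` has index
`r * j + k`. -/
def blockEquiv (m r : ℕ) : Fin m × Fin r ≃ Fin (r * m) :=
  finProdFinEquiv.trans (finCongr (Nat.mul_comm m r))

lemma prefixSum_mul_succ {M : Type*} [AddCommMonoid M] (f : Fin (r * m) → M) {j : ℕ} (hj : j < m) :
    prefixSum f (r * (j + 1)) = prefixSum f (r * j) + ∑ k, f (blockEquiv m r (⟨j, hj⟩, k)) := by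
  simp only [mul_add_one]
  rw [prefixSum_add f (r * j) ((mul_add_one r j).symm.trans_le (Nat.mul_le_mul_left r hj))]
  refine congrArg _ (Finset.sum_congr rfl fun k _ => congrArg f (Fin.ext ?_))
  simp [blockEquiv, add_comm]

lemma prefixSum_add_lt {n : ℕ} {b : Fin n → ℤ} {t d : ℕ} (hd : 0 < d) (hb : ∀ i, d * b i < A)
    (htd : t + d ≤ n) : prefixSum b (t + d) < prefixSum b t + A := by
  rw [prefixSum_add b t htd, add_lt_add_iff_left]
  have : NeZero d := ⟨hd.ne'⟩
  refine lt_of_mul_lt_mul_left ?_ (Int.natCast_nonneg d)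
  calc (d : ℤ) * ∑ k : Fin d, b ⟨t + k, by omega⟩
      = ∑ k : Fin d, d * b ⟨t + k, by omega⟩ := Finset.mul_sum ..
    _ < ∑ _k : Fin d, A := Finset.sum_lt_sum_of_nonempty Finset.univ_nonempty fun k _ => hb _
    _ = d * A := by simp

variable {b : Fin (r * m) → ℤ}

lemma BreaksAtMultiples.prefixSum_mul_le (h : BreaksAtMultiples A b) (hA : 0 < A) (hr : 2 ≤ r)
    (hb : ∀ i, ((r : ℤ) - 1) * b i < A) {j : ℕ} (hj : j ≤ m) : prefixSum b (r * j) ≤ j * A := by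
  induction j with
  | zero => simp [prefixSum_zero]
  | succ j ih =>
    obtain ⟨d, rfl⟩ := Nat.exists_eq_add_of_le' (by omega : 1 ≤ r)
    have hlast : (d + 1) * j + d < (d + 1) * m := by nlinarith
    have hlt := prefixSum_add_lt (by omega) (by simpa using hb) hlast.le
    obtain ⟨k, hk, hk'⟩ := h ⟨_, hlast⟩
    have hkj : k < j + 1 := lt_of_mul_lt_mul_right (by linarith [ih (by omega)]) hA.le
    calc prefixSum b ((d + 1) * (j + 1)) ≤ (k + 1) * A := hk'
      _ ≤ ((j + 1 : ℕ) : ℤ) * A := by gcongr; push_cast; omega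

lemma BreaksAtMultiples.le_prefixSum_mul (h : BreaksAtMultiples A b) (hA : 0 < A) (hr : 2 ≤ r)
    (hb : ∀ i, ((r : ℤ) - 1) * b i < A) (hsum : ∑ i, b i = m * A) {j : ℕ} (hj : j ≤ m) :
    j * A ≤ prefixSum b (r * j) := by
  induction hj using Nat.decreasingInduction with
  | self => rw [prefixSum_self, hsum]
  | of_succ j hj ih =>
    obtain ⟨d, rfl⟩ := Nat.exists_eq_add_of_le' (by omega : 1 ≤ r)
    have hblock : (d + 1) * j + 1 + d = (d + 1) * (j + 1) := by ring
    have hend : (d + 1) * (j + 1) ≤ (d + 1) * m := Nat.mul_le_mul_left _ hj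
    have hlt := prefixSum_add_lt (t := (d + 1) * j + 1) (d := d) (by omega) (by simpa using hb)
      (hblock.trans_le hend)
    rw [hblock] at hlt
    obtain ⟨k, hk, hk'⟩ := h ⟨(d + 1) * j, by omega⟩
    have hjk : (j : ℤ) < k + 1 := lt_of_mul_lt_mul_right (by push_cast at ih; linarith) hA.le
    calc j * A ≤ k * A := by gcongr; omega
      _ ≤ prefixSum b ((d + 1) * j) := hk

lemma breaksAtMultiples_of_prefixSum_mul_eq (hb : ∀ i, 0 ≤ b i)
    (h : ∀ j ≤ m, prefixSum b (r * j) = j * A) : BreaksAtMultiples A b := by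
  intro i
  have hlt : i / r < m := Nat.div_lt_of_lt_mul i.2
  refine ⟨(i / r : ℕ), ?_, ?_⟩
  · rw [← h _ hlt.le]
    exact prefixSum_mono hb (Nat.mul_div_le ..)
  · rw [← Nat.cast_add_one, ← h _ hlt]
    exact prefixSum_mono hb (Nat.lt_mul_div_succ i (Nat.pos_of_mul_pos_right i.pos))

lemma prefixSum_mul_eq_iff_sum_block_eq :
    (∀ j ≤ m, prefixSum b (r * j) = j * A) ↔ ∀ j, ∑ k, b (blockEquiv m r (j, k)) = A := by
  constructor
  · intro h j
    have hsucc := prefixSum_mul_succ b j.2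
    rw [h _ j.2, h _ j.2.le] at hsucc
    push_cast at hsucc
    linarith
  · intro h j hj
    induction j with
    | zero => simp [prefixSum_zero]
    | succ j ih =>
      rw [prefixSum_mul_succ b hj, h, ih (by omega)]
      push_cast
      ring

theorem breaksAtMultiples_iff_sum_block_eq (hA : 0 < A) (hr : 2 ≤ r) (hb0 : ∀ i, 0 ≤ b i)
    (hb : ∀ i, ((r : ℤ) - 1) * b i < A) (hsum : ∑ i, b i = m * A) :
    BreaksAtMultiples A b ↔ ∀ j, ∑ k, b (blockEquiv m r (j, k)) = A := by
  rw [← prefixSum_mul_eq_iff_sum_block_eq]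
  exact ⟨fun h _ hj => (h.prefixSum_mul_le hA hr hb hj).antisymm
    (h.le_prefixSum_mul hA hr hb hsum hj), breaksAtMultiples_of_prefixSum_mul_eq hb0⟩

end Blocks

section Partition

variable {α ι κ : Type*} [Fintype α] [DecidableEq α] [Fintype ι] [Fintype κ]

lemma exists_finpartition_of_equiv [Nonempty κ] (e : ι × κ ≃ α) :
    ∃ P : Finpartition (Finset.univ : Finset α), P.parts.card = Fintype.card ι ∧
      ∀ q ∈ P.parts, ∃ j, q = Finset.univ.image fun k => e (j, k) := by
  classical
  let row (j : ι) : Finset α := Finset.univ.image fun k => e (j, k)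
  have hmem (i : α) (j : ι) : i ∈ row j ↔ (e.symm i).1 = j := by
    simp only [row, Finset.mem_image, Finset.mem_univ, true_and, ← e.eq_symm_apply, Prod.ext_iff]
    exact ⟨fun ⟨_, hj, _⟩ => hj.symm, fun hj => ⟨_, hj.symm, rfl⟩⟩
  have hne (j : ι) : (row j).Nonempty := Finset.univ_nonempty.image _
  have hinj : Function.Injective row := fun j j' hjj' => by
    obtain ⟨i, hi⟩ := hne j
    exact ((hmem i j).1 hi).symm.trans ((hmem i j').1 (hjj' ▸ hi))
  refine ⟨.ofExistsUnique (Finset.univ.image row) (fun _ _ => Finset.subset_univ _) ?_ ?_, ?_, ?_⟩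
  · rintro i -
    refine ⟨row (e.symm i).1, ⟨by simp, (hmem _ _).2 rfl⟩, ?_⟩
    simp only [Finset.mem_image, Finset.mem_univ, true_and]
    rintro _ ⟨⟨j, rfl⟩, hj⟩
    rw [(hmem i j).1 hj]
  · simpa using fun j => (hne j).ne_empty
  · exact Finset.card_image_of_injective _ hinj
  · simp [Finpartition.ofExistsUnique, row, eq_comm]

lemma exists_equiv_image_mem_parts (P : Finpartition (Finset.univ : Finset α))
    (hP : P.parts.card = Fintype.card ι) (hcard : ∀ q ∈ P.parts, q.card = Fintype.card κ) :
    ∃ e : ι × κ ≃ α, ∀ j, (Finset.univ.image fun k => e (j, k)) ∈ P.parts := by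
  let label : ι ≃ P.parts := Fintype.equivOfCardEq (by simp [hP])
  let enum (q : P.parts) : κ ≃ q.1 := Fintype.equivOfCardEq (by simp [hcard])
  let e : ι × κ ≃ α := (Equiv.sigmaEquivProd ι κ).symm.trans <|
    (label.sigmaCongr fun j => enum (label j)).trans <|
      P.equivSigmaParts.symm.trans (Equiv.subtypeUnivEquiv Finset.mem_univ)
  refine ⟨e, fun j => ?_⟩
  have hrow : Finset.univ.image (fun k => e (j, k)) = (label j).1 := by
    ext i
    simp only [Finset.mem_image, Finset.mem_univ, true_and]
    constructor
    · rintro ⟨k, rfl⟩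
      exact (enum (label j) k).2
    · intro hi
      exact ⟨(enum (label j)).symm ⟨i, hi⟩,
        congrArg Subtype.val ((enum (label j)).apply_symm_apply ⟨i, hi⟩)⟩
  exact hrow ▸ (label j).2

theorem exists_finpartition_sum_eq_iff_exists_equiv [Nonempty κ] {M : Type*} [AddCommMonoid M]
    {f : α → M} {c : M} :
    (∃ P : Finpartition (Finset.univ : Finset α), P.parts.card = Fintype.card ι ∧
      ∀ q ∈ P.parts, q.card = Fintype.card κ ∧ ∑ i ∈ q, f i = c) ↔
    ∃ e : ι × κ ≃ α, ∀ j, ∑ k, f (e (j, k)) = c := by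
  have hinj (e : ι × κ ≃ α) (j : ι) : Function.Injective fun k => e (j, k) :=
    e.injective.comp (Prod.mk_right_injective j)
  have hsum (e : ι × κ ≃ α) (j : ι) :
      ∑ i ∈ Finset.univ.image (fun k => e (j, k)), f i = ∑ k, f (e (j, k)) :=
    Finset.sum_image (hinj e j).injOn
  constructor
  · rintro ⟨P, hP, hparts⟩
    obtain ⟨e, he⟩ := exists_equiv_image_mem_parts (κ := κ) P hP fun q hq => (hparts q hq).1
    exact ⟨e, fun j => (hsum e j).symm.trans (hparts _ (he j)).2⟩
  · rintro ⟨e, he⟩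
    obtain ⟨P, hP, hparts⟩ := exists_finpartition_of_equiv e
    refine ⟨P, hP, fun q hq => ?_⟩
    obtain ⟨j, rfl⟩ := hparts q hq
    exact ⟨Finset.card_image_of_injective _ (hinj e j), (hsum e j).trans (he j)⟩

end Partition

theorem stmt_8_general (r m : ℕ) (hr : 2 ≤ r) (A : ℤ) (hA : 0 < A) (a : Fin (r * m) → ℤ)
    (ha0 : ∀ i, 0 < a i) (ha : ∀ i, ((r : ℤ) - 1) * a i < A) (hsum : ∑ i, a i = (m : ℤ) * A)
    (p : ℕ → ℤ × ℤ)
    (hp : ∀ j, p j = (((j / 2 : ℕ) : ℤ) * A, (((j + 1) / 2 % 2 : ℕ) : ℤ) * A))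
    (F : Set (ℝ × ℝ))
    (hF : F = ⋃ j ∈ Finset.Icc 1 m, segment ℝ (toR (p (j - 1))) (toR (p j))) :
    (∃ (π : Equiv.Perm (Fin (r * m))) (ε : Fin (r * m) → ℤ)
        (o : Fin (r * m) → ℤ × ℤ) (X : ℕ → ℝ × ℝ),
      (∀ i, ε i = 1 ∨ ε i = -1) ∧
      (∀ i, o i = (1, 0) ∨ o i = (0, 1)) ∧
      (∀ t : ℕ, X t = toR (p 0) + toR (∑ i ∈ Finset.univ.filter
          (fun i : Fin (r * m) => (i : ℕ) < t), (ε i * a (π i)) • o i)) ∧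
      (∀ i : ℕ, 1 ≤ i → i ≤ r * m → segment ℝ (X (i - 1)) (X i) ⊆ F) ∧
      X (r * m) = toR (p m)) ↔
    (∃ P : Finpartition (Finset.univ : Finset (Fin (r * m))),
      P.parts.card = m ∧ ∀ q ∈ P.parts, q.card = r ∧ ∑ i ∈ q, a i = A) := by
  obtain rfl : p = fun j : ℕ => zigzagVertex A j := funext fun j => by simp [hp, zigzagVertex]
  subst hF
  have : NeZero r := ⟨by omega⟩
  have haA (i) : a i < A := by nlinarith [ha0 i, ha i]
  have hπ (π : Equiv.Perm (Fin (r * m))) : OverlaysZigzag A m (a ∘ π) ↔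
      ∀ j, ∑ k, a (π (blockEquiv m r (j, k))) = A := by
    have hsumπ : ∑ i, (a ∘ π) i = m * A := (Equiv.sum_comp π a).trans hsum
    exact (overlaysZigzag_iff_breaksAtMultiples hA (fun i => ha0 _) (fun i => haA _) hsumπ).trans <|
      breaksAtMultiples_iff_sum_block_eq hA hr (fun i => (ha0 _).le) (fun i => ha _) hsumπ
  calc (∃ π : Equiv.Perm (Fin (r * m)), OverlaysZigzag A m (a ∘ π))
    _ ↔ ∃ e : Fin m × Fin r ≃ Fin (r * m), ∀ j, ∑ k, a (e (j, k)) = A := by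
      simp only [hπ]
      exact ⟨fun ⟨π, h⟩ => ⟨(blockEquiv m r).trans π, h⟩,
        fun ⟨e, h⟩ => ⟨(blockEquiv m r).symm.trans e, by simpa using h⟩⟩
    _ ↔ _ := by
      simpa only [Fintype.card_fin] using
        (exists_finpartition_sum_eq_iff_exists_equiv (ι := Fin m) (κ := Fin r)).symm

/-- Zero-error variant of the DPA-S hardness reduction (Corollary 1): an
axis-aligned path from `p 0` to `p m` using each strut length `a i` exactly
once that exactly overlays the zigzag polyline `F` (every segment of the path
is contained in `F`) exists iff `Fin (3m)` can be partitioned into `m`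
three-element sets each with `a`-sum `A`. (Steps are indexed 0-based:
`X t` is the node after the first `t` steps.) -/
theorem stmt_8 (m : ℕ) (hm : 0 < m) (A : ℤ) (hA : 0 < A)
    (a : Fin (3 * m) → ℤ)
    (h4 : ∀ i, 4 * a i > A) (h2 : ∀ i, 2 * a i < A)
    (hsum : ∑ i, a i = (m : ℤ) * A)
    (p : ℕ → ℤ × ℤ)
    (hp : ∀ j, p j = (((j / 2 : ℕ) : ℤ) * A, (((j + 1) / 2 % 2 : ℕ) : ℤ) * A))
    (F : Set (ℝ × ℝ))
    (hF : F = ⋃ j ∈ Finset.Icc 1 m, segment ℝ (toR (p (j - 1))) (toR (p j))) :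
    (∃ (π : Equiv.Perm (Fin (3 * m))) (ε : Fin (3 * m) → ℤ)
        (o : Fin (3 * m) → ℤ × ℤ) (X : ℕ → ℝ × ℝ),
      (∀ i, ε i = 1 ∨ ε i = -1) ∧
      (∀ i, o i = (1, 0) ∨ o i = (0, 1)) ∧
      (∀ t : ℕ, X t = toR (p 0) + toR (∑ i ∈ Finset.univ.filter
          (fun i : Fin (3 * m) => (i : ℕ) < t), (ε i * a (π i)) • o i)) ∧
      (∀ i : ℕ, 1 ≤ i → i ≤ 3 * m → segment ℝ (X (i - 1)) (X i) ⊆ F) ∧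
      X (3 * m) = toR (p m)) ↔
    (∃ P : Finpartition (Finset.univ : Finset (Fin (3 * m))),
      P.parts.card = m ∧ ∀ q ∈ P.parts, q.card = 3 ∧ ∑ i ∈ q, a i = A) :=
  stmt_8_general 3 m (by norm_num) A hA a (fun i => by linarith [h4 i])
    (fun i => by norm_num [h2 i]) hsum p hp F hF
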